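/- Let π be a probability measure on [0,1]^p, let C₀* > 0, and let f, f₀ : [0,1]^p → ℝ be measurable functions with ‖f‖_∞ ≤ C₀* and ‖f₀‖_∞ ≤ C₀*. Then for every j ∈ {1,…,p}, the Shapley effects satisfy |S_{j,π}(f) − S_{j,π}(f₀)| ≤ 8C₀* · ‖f − f₀‖_{L²(π)}. -/

import Mathlib

open MeasureTheory Finset

/-- The unit hypercube `[0,1]^p`. -/
abbrev UnitCube (p : ℕ) := Fin p → Set.Icc (0 : ℝ) 1

/-- The sub-σ-algebra of `[0,1]^p` generated by the projection onto the coordinates in `P`. -/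
def coordSubAlg (p : ℕ) (P : Finset (Fin p)) : MeasurableSpace (UnitCube p) :=
  MeasurableSpace.comap (fun x (i : P) => x i) MeasurableSpace.pi

/-- The cost functional `c_{P,π}(g) = E[(E[g(X) | X_P])²] - (E[g(X)])²` for `X ∼ π`,
with `c_{∅,π}(g) := 0`. -/
noncomputable def cost {p : ℕ} (π : Measure (UnitCube p)) (P : Finset (Fin p))
    (g : UnitCube p → ℝ) : ℝ :=
  if P = ∅ then 0 else
    (∫ x, ((π[g | coordSubAlg p P]) x) ^ 2 ∂π) - (∫ x, g x ∂π) ^ 2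

/-- The `j`-th Shapley effect
`S_{j,π}(g) = (p!)⁻¹ ∑_{P ⊆ [p]\{j}} (p - |P| - 1)! |P|! [c_{P∪{j},π}(g) - c_{P,π}(g)]`. -/
noncomputable def shapleyEffect {p : ℕ} (π : Measure (UnitCube p)) (j : Fin p)
    (g : UnitCube p → ℝ) : ℝ :=
  ((p.factorial : ℝ))⁻¹ *
    ∑ P ∈ (Finset.univ.erase j).powerset,
      ((p - P.card - 1).factorial : ℝ) * (P.card.factorial : ℝ) *
        (cost π (insert j P) g - cost π P g)

/-!
By the law of total variance, the marginal cost `c_{P ∪ {j}}(g) - c_P(g)` is the squared `L²` norm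
of the projection `D g = E[g | X_{P ∪ {j}}] - E[g | X_P]`, so it is at most `‖g‖²`. The difference
of two such squares is `‖D f‖² - ‖D f₀‖² = ⟪D (f + f₀), D (f - f₀)⟫`, and Cauchy–Schwarz bounds it
by `‖f + f₀‖ * ‖f - f₀‖`. A Shapley effect is a weighted mean of marginal costs, hence inherits
this bound.
-/

open ProbabilityTheory

section Variance

variable {Ω : Type*} {m₁ m₂ m₀ : MeasurableSpace Ω} {μ : Measure[m₀] Ω} {X Y : Ω → ℝ}

lemma abs_integral_mul_le_sqrt_mul_sqrt (hX : MemLp X 2 μ) (hY : MemLp Y 2 μ) :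
    |∫ ω, X ω * Y ω ∂μ| ≤ √(∫ ω, X ω ^ 2 ∂μ) * √(∫ ω, Y ω ^ 2 ∂μ) := by
  have holder := integral_mul_norm_le_Lp_mul_Lq (p := 2) (q := 2) (μ := μ) (f := X) (g := Y)
    Real.HolderConjugate.two_two (by simpa using hX) (by simpa using hY)
  calc |∫ ω, X ω * Y ω ∂μ|
      ≤ ∫ ω, ‖X ω‖ * ‖Y ω‖ ∂μ := by
        simpa only [norm_mul, Real.norm_eq_abs] using
          norm_integral_le_integral_norm (μ := μ) (fun ω ↦ X ω * Y ω)
    _ ≤ √(∫ ω, X ω ^ 2 ∂μ) * √(∫ ω, Y ω ^ 2 ∂μ) := by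
        simpa [Real.sqrt_eq_rpow] using holder

lemma abs_integral_sq_sub_integral_sq_le (hX : MemLp X 2 μ) (hY : MemLp Y 2 μ) :
    |(∫ ω, X ω ^ 2 ∂μ) - ∫ ω, Y ω ^ 2 ∂μ| ≤
      √(∫ ω, (X ω + Y ω) ^ 2 ∂μ) * √(∫ ω, (X ω - Y ω) ^ 2 ∂μ) := by
  rw [← integral_sub hX.integrable_sq hY.integrable_sq]
  simpa only [sq_sub_sq, Pi.add_apply, Pi.sub_apply] using
    abs_integral_mul_le_sqrt_mul_sqrt (hX.add hY) (hX.sub hY)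

lemma sqrt_integral_sq_le_of_ae_abs_le [IsProbabilityMeasure μ] {C : ℝ}
    (hX : ∀ᵐ ω ∂μ, |X ω| ≤ C) : √(∫ ω, X ω ^ 2 ∂μ) ≤ C := by
  obtain ⟨ω₀, hω₀⟩ := hX.exists
  have hC : 0 ≤ C := (abs_nonneg _).trans hω₀
  have hX_sq : ∀ᵐ ω ∂μ, ‖X ω ^ 2‖ ≤ C ^ 2 := hX.mono fun ω hω ↦ by
    simpa using sq_le_sq.mpr (hω.trans (le_abs_self C))
  refine Real.sqrt_le_iff.mpr ⟨hC, ?_⟩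
  simpa using (Real.le_norm_self _).trans (norm_integral_le_of_norm_le_const hX_sq)

lemma variance_condExp_le [IsProbabilityMeasure μ] (hm : m₁ ≤ m₀) (hX : MemLp X 2 μ) :
    Var[μ[X | m₁]; μ] ≤ Var[X; μ] := by
  have condVar_nonneg : 0 ≤ ∫ ω, Var[X; μ | m₁] ω ∂μ :=
    integral_nonneg_of_ae (condExp_nonneg (.of_forall fun ω ↦ sq_nonneg _))
  linarith [integral_condVar_add_variance_condExp hm hX]

variable (m₁ m₂ μ X) in
/-- The martingale difference `E[X | m₂] - E[X | m₁]` of a random variable along `m₁ ≤ m₂`. Its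
second moment is the gain in explained variance when the information grows from `m₁` to `m₂`. -/
noncomputable def condExpIncrement : Ω → ℝ :=
  μ[X | m₂] - μ[X | m₁]

lemma memLp_condExpIncrement (hX : MemLp X 2 μ) : MemLp (condExpIncrement m₁ m₂ μ X) 2 μ :=
  (hX.condExp one_le_two).sub (hX.condExp one_le_two)

lemma condExpIncrement_add (hX : Integrable X μ) (hY : Integrable Y μ) :
    condExpIncrement m₁ m₂ μ (X + Y) =ᵐ[μ]
      condExpIncrement m₁ m₂ μ X + condExpIncrement m₁ m₂ μ Y := by
  filter_upwards [condExp_add hX hY m₁, condExp_add hX hY m₂] with ω hω₁ hω₂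
  simp only [condExpIncrement, Pi.sub_apply, Pi.add_apply, hω₁, hω₂]
  ring

lemma condExpIncrement_sub (hX : Integrable X μ) (hY : Integrable Y μ) :
    condExpIncrement m₁ m₂ μ (X - Y) =ᵐ[μ]
      condExpIncrement m₁ m₂ μ X - condExpIncrement m₁ m₂ μ Y := by
  filter_upwards [condExp_sub hX hY m₁, condExp_sub hX hY m₂] with ω hω₁ hω₂
  simp only [condExpIncrement, Pi.sub_apply, hω₁, hω₂]
  ring

variable [IsProbabilityMeasure μ]

lemma variance_condExp_sub_variance_condExp (h₁₂ : m₁ ≤ m₂) (h₂ : m₂ ≤ m₀) (hX : MemLp X 2 μ) :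
    Var[μ[X | m₂]; μ] - Var[μ[X | m₁]; μ] = ∫ ω, condExpIncrement m₁ m₂ μ X ω ^ 2 ∂μ := by
  have hX₂ : MemLp (μ[X | m₂]) 2 μ := hX.condExp one_le_two
  have tower : μ[μ[X | m₂] | m₁] =ᵐ[μ] μ[X | m₁] := condExp_condExp_of_le h₁₂ h₂
  calc Var[μ[X | m₂]; μ] - Var[μ[X | m₁]; μ]
      = ∫ ω, Var[μ[X | m₂]; μ | m₁] ω ∂μ := by
        rw [← integral_condVar_add_variance_condExp (h₁₂.trans h₂) hX₂, variance_congr tower,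
          add_sub_cancel_right]
    _ = ∫ ω, ((μ[X | m₂] - μ[μ[X | m₂] | m₁]) ω) ^ 2 ∂μ := integral_condExp (h₁₂.trans h₂)
    _ = ∫ ω, condExpIncrement m₁ m₂ μ X ω ^ 2 ∂μ :=
        integral_congr_ae (tower.mono fun ω hω ↦ by simp only [condExpIncrement, Pi.sub_apply, hω])

lemma integral_condExpIncrement_sq_le (h₁₂ : m₁ ≤ m₂) (h₂ : m₂ ≤ m₀) (hX : MemLp X 2 μ) :
    ∫ ω, condExpIncrement m₁ m₂ μ X ω ^ 2 ∂μ ≤ ∫ ω, X ω ^ 2 ∂μ :=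
  calc ∫ ω, condExpIncrement m₁ m₂ μ X ω ^ 2 ∂μ
      = Var[μ[X | m₂]; μ] - Var[μ[X | m₁]; μ] :=
        (variance_condExp_sub_variance_condExp h₁₂ h₂ hX).symm
    _ ≤ Var[μ[X | m₂]; μ] := sub_le_self _ (variance_nonneg _ _)
    _ ≤ Var[X; μ] := variance_condExp_le h₂ hX
    _ ≤ ∫ ω, X ω ^ 2 ∂μ := variance_le_expectation_sq hX.aestronglyMeasurable

lemma abs_integral_condExpIncrement_sq_sub_le (h₁₂ : m₁ ≤ m₂) (h₂ : m₂ ≤ m₀) (hX : MemLp X 2 μ)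
    (hY : MemLp Y 2 μ) :
    |(∫ ω, condExpIncrement m₁ m₂ μ X ω ^ 2 ∂μ) - ∫ ω, condExpIncrement m₁ m₂ μ Y ω ^ 2 ∂μ| ≤
      √(∫ ω, (X ω + Y ω) ^ 2 ∂μ) * √(∫ ω, (X ω - Y ω) ^ 2 ∂μ) := by
  have hX_int : Integrable X μ := hX.integrable one_le_two
  have hY_int : Integrable Y μ := hY.integrable one_le_two
  have integral_add_le :
      ∫ ω, (condExpIncrement m₁ m₂ μ X ω + condExpIncrement m₁ m₂ μ Y ω) ^ 2 ∂μ ≤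
        ∫ ω, (X ω + Y ω) ^ 2 ∂μ :=
    (integral_congr_ae ((condExpIncrement_add hX_int hY_int).symm.fun_comp (· ^ 2))).trans_le
      (integral_condExpIncrement_sq_le h₁₂ h₂ (hX.add hY))
  have integral_sub_le :
      ∫ ω, (condExpIncrement m₁ m₂ μ X ω - condExpIncrement m₁ m₂ μ Y ω) ^ 2 ∂μ ≤
        ∫ ω, (X ω - Y ω) ^ 2 ∂μ :=
    (integral_congr_ae ((condExpIncrement_sub hX_int hY_int).symm.fun_comp (· ^ 2))).trans_le
      (integral_condExpIncrement_sq_le h₁₂ h₂ (hX.sub hY))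
  exact (abs_integral_sq_sub_integral_sq_le (memLp_condExpIncrement hX)
    (memLp_condExpIncrement hY)).trans
      (mul_le_mul (Real.sqrt_le_sqrt integral_add_le) (Real.sqrt_le_sqrt integral_sub_le)
        (Real.sqrt_nonneg _) (Real.sqrt_nonneg _))

end Variance

lemma sum_powerset_factorial_mul_factorial {α : Type*} (s : Finset α) :
    ∑ P ∈ s.powerset, (#s - #P).factorial * (#P).factorial = (#s + 1).factorial := by
  have choose_mul : ∀ k ∈ range (#s + 1),
      (#s).choose k • ((#s - k).factorial * k.factorial) = (#s).factorial := fun k hk ↦ by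
    rw [← Nat.choose_mul_factorial_mul_factorial (mem_range_succ_iff.mp hk), smul_eq_mul]
    ring
  rw [sum_powerset_apply_card (fun k ↦ (#s - k).factorial * k.factorial),
    sum_congr rfl choose_mul, sum_const, card_range, smul_eq_mul, Nat.factorial_succ]

section Shapley

variable {p : ℕ} {π : Measure (UnitCube p)}

lemma coordSubAlg_le (P : Finset (Fin p)) : coordSubAlg p P ≤ MeasurableSpace.pi :=
  Measurable.comap_le (by fun_prop)

lemma coordSubAlg_mono {P Q : Finset (Fin p)} (hPQ : P ⊆ Q) :
    coordSubAlg p P ≤ coordSubAlg p Q := by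
  let restrict : (Q → Set.Icc (0 : ℝ) 1) → P → Set.Icc (0 : ℝ) 1 := fun y i ↦ y ⟨i, hPQ i.2⟩
  have hrestrict : Measurable restrict := by fun_prop
  calc coordSubAlg p P
      = (MeasurableSpace.pi.comap restrict).comap (fun x i ↦ x i) := by
        rw [MeasurableSpace.comap_comp]
        rfl
    _ ≤ coordSubAlg p Q := MeasurableSpace.comap_mono hrestrict.comap_le

lemma coordSubAlg_empty : coordSubAlg p ∅ = ⊥ := by
  rw [coordSubAlg, Subsingleton.elim (fun (x : UnitCube p) (i : (∅ : Finset (Fin p))) ↦ x i)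
    (fun _ ↦ isEmptyElim), MeasurableSpace.comap_const]

lemma cost_eq_variance_condExp [IsProbabilityMeasure π] (P : Finset (Fin p)) {g : UnitCube p → ℝ}
    (hg : MemLp g 2 π) : cost π P g = Var[π[g | coordSubAlg p P]; π] := by
  obtain rfl | hP := P.eq_empty_or_nonempty
  · simp [cost, coordSubAlg_empty, condExp_bot, variance_eq_integral]
  · rw [cost, if_neg hP.ne_empty, variance_eq_sub (hg.condExp one_le_two),
      integral_condExp (coordSubAlg_le P)]
    rfl

lemma cost_insert_sub_cost [IsProbabilityMeasure π] (j : Fin p) (P : Finset (Fin p))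
    {g : UnitCube p → ℝ} (hg : MemLp g 2 π) :
    cost π (insert j P) g - cost π P g =
      ∫ x, condExpIncrement (coordSubAlg p P) (coordSubAlg p (insert j P)) π g x ^ 2 ∂π := by
  rw [cost_eq_variance_condExp _ hg, cost_eq_variance_condExp _ hg]
  exact variance_condExp_sub_variance_condExp (coordSubAlg_mono (subset_insert j P))
    (coordSubAlg_le _) hg

lemma sum_shapley_weights (j : Fin p) :
    ∑ P ∈ (univ.erase j).powerset, ((p - #P - 1).factorial : ℝ) * (#P).factorial =
      p.factorial := by
  have hcard : #(univ.erase j) = p - 1 := by simp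
  have hsum := sum_powerset_factorial_mul_factorial (univ.erase j)
  simp only [hcard, Nat.sub_add_cancel j.pos] at hsum
  simp only [Nat.sub_right_comm p _ 1]
  exact_mod_cast hsum

lemma abs_shapleyEffect_sub_le (j : Fin p) {f f₀ : UnitCube p → ℝ} {B : ℝ}
    (hB : ∀ P, |(cost π (insert j P) f - cost π P f) -
      (cost π (insert j P) f₀ - cost π P f₀)| ≤ B) :
    |shapleyEffect π j f - shapleyEffect π j f₀| ≤ B := by
  rw [shapleyEffect, shapleyEffect, ← mul_sub, ← sum_sub_distrib, abs_mul,
    abs_of_nonneg (by positivity), inv_mul_le_iff₀ (by positivity), ← sum_shapley_weights j,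
    sum_mul]
  refine (abs_sum_le_sum_abs _ _).trans (sum_le_sum fun P _ ↦ ?_)
  rw [← mul_sub, abs_mul, abs_of_nonneg (by positivity)]
  gcongr
  exact hB P

theorem stmt8_general [IsProbabilityMeasure π] {f f₀ : UnitCube p → ℝ} (hf : MemLp f 2 π)
    (hf₀ : MemLp f₀ 2 π) (j : Fin p) :
    |shapleyEffect π j f - shapleyEffect π j f₀| ≤
      √(∫ x, (f x + f₀ x) ^ 2 ∂π) * √(∫ x, (f x - f₀ x) ^ 2 ∂π) := by
  refine abs_shapleyEffect_sub_le j fun P ↦ ?_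
  rw [cost_insert_sub_cost j P hf, cost_insert_sub_cost j P hf₀]
  exact abs_integral_condExpIncrement_sq_sub_le (coordSubAlg_mono (subset_insert j P))
    (coordSubAlg_le _) hf hf₀

end Shapley

/-- If `f, f₀ : [0,1]^p → ℝ` are measurable and bounded in supremum norm by
`C₀* > 0`, then for every `j`, `|S_{j,π}(f) - S_{j,π}(f₀)| ≤ 8 C₀* ‖f - f₀‖_{L²(π)}`. -/
theorem stmt8 {p : ℕ} (π : Measure (UnitCube p)) [IsProbabilityMeasure π]
    (C₀ : ℝ) (hC₀ : 0 < C₀)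
    (f f₀ : UnitCube p → ℝ) (hf : Measurable f) (hf₀ : Measurable f₀)
    (hfb : ∀ x, |f x| ≤ C₀) (hf₀b : ∀ x, |f₀ x| ≤ C₀) :
    ∀ j : Fin p,
      |shapleyEffect π j f - shapleyEffect π j f₀| ≤
        8 * C₀ * Real.sqrt (∫ x, |f x - f₀ x| ^ 2 ∂π) := by
  intro j
  have norm_add_le : √(∫ x, (f x + f₀ x) ^ 2 ∂π) ≤ 8 * C₀ :=
    sqrt_integral_sq_le_of_ae_abs_le (.of_forall fun x ↦ by
      linarith [abs_add_le (f x) (f₀ x), hfb x, hf₀b x])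
  have hf_memLp : MemLp f 2 π := .of_bound hf.aestronglyMeasurable C₀ (.of_forall hfb)
  have hf₀_memLp : MemLp f₀ 2 π := .of_bound hf₀.aestronglyMeasurable C₀ (.of_forall hf₀b)
  simpa only [sq_abs] using (stmt8_general hf_memLp hf₀_memLp j).trans (by gcongr)
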